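/- Let (X,d) be a metric space preordered by a reflexive transitive relation ≼ such that every ≼-decreasing Cauchy sequence in X converges in X. Assume that: (i) for every x ∈ X the lower section S(x) := {x' ∈ X | x' ≼ x} is ≼-lower closed, i.e. for every ≼-decreasing sequence (x_n)_{n≥1} ⊆ S(x) with x_n → u one has u ∈ S(x); and (ii) every ≼-decreasing sequence (x_n)_{n≥1} ⊆ X is asymptotic, i.e. d(x_n,x_{n+1}) → 0. Then for every x ∈ X there exists x̄ ∈ X such that x̄ ≼ x and S(x̄) = {x̄}. -/

import Mathlib

/-- Dancs–Hegedüs–Medvegyev / Turinici type minimal element theorem on a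
`≼`-complete metric space with `≼`-lower closed sections and asymptotic
decreasing sequences. -/
theorem statement9 {X : Type*} [MetricSpace X]
    (r : X → X → Prop) (hrefl : ∀ x, r x x) (htrans : Transitive r)
    (hcomplete : ∀ x : ℕ → X, (∀ n, r (x (n + 1)) (x n)) → CauchySeq x →
      ∃ l, Filter.Tendsto x Filter.atTop (nhds l))
    (hlowerclosed : ∀ x : X, ∀ w : ℕ → X, (∀ n, r (w n) x) →
      (∀ n, r (w (n + 1)) (w n)) → ∀ u, Filter.Tendsto w Filter.atTop (nhds u) → r u x)
    (hasymptotic : ∀ w : ℕ → X, (∀ n, r (w (n + 1)) (w n)) →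
      Filter.Tendsto (fun n => dist (w n) (w (n + 1))) Filter.atTop (nhds 0)) :
    ∀ x : X, ∃ xbar, r xbar x ∧ {x' | r x' xbar} = {xbar} := by
  have A : ∀ (n : ℕ) (x : X), ∃ y, r y x ∧ ∀ z, r z y → dist y z ≤ 1 / ((n : ℝ) + 1) := by
    intro n x
    by_contra hcon
    have h : ∀ y : {y // r y x}, ∃ z : {y // r y x}, r z.1 y.1 ∧
        1 / ((n : ℝ) + 1) < dist y.1 z.1 := by
      rintro ⟨y, hy⟩
      by_contra hc
      refine hcon ⟨y, hy, fun z hz => ?_⟩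
      by_contra hlt
      exact hc ⟨⟨z, htrans hz hy⟩, hz, not_le.mp hlt⟩
    choose g hg1 hg2 using h
    let w : ℕ → {y // r y x} := fun k => Nat.rec ⟨x, hrefl x⟩ (fun _ y => g y) k
    have hw := hasymptotic (fun k => (w k).1) (fun k => hg1 (w k))
    have hpos : (0 : ℝ) < 1 / ((n : ℝ) + 1) := by positivity
    obtain ⟨k, hk⟩ := (hw.eventually (gt_mem_nhds hpos)).exists
    exact absurd (hg2 (w k)) (not_lt.mpr hk.le)
  intro x
  choose g hg1 hg2 using A
  let s : ℕ → X := fun k => Nat.rec (g 0 x) (fun n y => g (n + 1) y) k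
  have hs0 : r (s 0) x := hg1 0 x
  have hs : ∀ n, r (s (n + 1)) (s n) := fun n => hg1 (n + 1) (s n)
  have hd : ∀ n z, r z (s n) → dist (s n) z ≤ 1 / ((n : ℝ) + 1) := by
    intro n
    cases n with
    | zero => exact hg2 0 x
    | succ n => exact hg2 (n + 1) (s n)
  have hle : ∀ n m, n ≤ m → r (s m) (s n) := by
    intro n m h
    induction h with
    | refl => exact hrefl _
    | step _ ih => exact htrans (hs _) ih
  have hc : CauchySeq s := cauchySeq_of_le_tendsto_0' (fun n : ℕ => 1 / ((n : ℝ) + 1))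
    (fun n m h => hd n _ (hle n m h)) tendsto_one_div_add_atTop_nhds_zero_nat
  obtain ⟨u, hu⟩ := hcomplete s hs hc
  have hus : ∀ n, r u (s n) := fun n =>
    hlowerclosed (s n) (fun k => s (k + n)) (fun k => hle n (k + n) (Nat.le_add_left _ _))
      (fun k => hle (k + n) (k + 1 + n) (by omega)) u
      ((Filter.tendsto_add_atTop_iff_nat n).mpr hu)
  refine ⟨u, htrans (hus 0) hs0, ?_⟩
  ext z
  simp only [Set.mem_setOf_eq, Set.mem_singleton_iff]
  constructor
  · intro hz
    have hz' : Filter.Tendsto s Filter.atTop (nhds z) := by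
      rw [tendsto_iff_dist_tendsto_zero]
      exact squeeze_zero (fun _ => dist_nonneg) (fun n => hd n z (htrans hz (hus n)))
        tendsto_one_div_add_atTop_nhds_zero_nat
    exact tendsto_nhds_unique hz' hu
  · rintro rfl
    exact hrefl _
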